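/- Let (h_n, u_n, f_n) be a contradiction sequence and let χ ∈ C_c^∞(ℝ) with χ(z) = 1 for |z| ≤ 1 and χ(z) = 0 for |z| ≥ 2. Set w_n := (1 − χ(a/h_n))·u_n. Then: (i) ‖w_n‖_{L²} + ‖h_n∇w_n‖_{L²} = o(h_n^{1/2}) as n → ∞; and (ii) for every c > 0, ∫_{{x : a(x) ≥ c·h_n}} (|u_n|² + ‖h_n∇u_n‖²) dx = o(h_n) as n → ∞. -/

import Mathlib

open MeasureTheory Complex ComplexConjugate

noncomputable section

/-- Partial derivative `∂u/∂xᵢ` of a complex-valued function on `ℝ^d`. -/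
def pd {d : ℕ} (i : Fin d) (u : EuclideanSpace ℝ (Fin d) → ℂ)
    (x : EuclideanSpace ℝ (Fin d)) : ℂ :=
  fderiv ℝ u x (EuclideanSpace.single i (1 : ℝ))

/-- Laplacian `Δu = ∑ᵢ ∂²u/∂xᵢ²` of a complex-valued function on `ℝ^d`. -/
def lap {d : ℕ} (u : EuclideanSpace ℝ (Fin d) → ℂ)
    (x : EuclideanSpace ℝ (Fin d)) : ℂ :=
  ∑ i : Fin d, pd i (pd i u) x

/-- The semiclassical Kelvin–Voigt operator
`P_h u = -h²Δu - u - i h (∇a·∇u + a Δu)`. -/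
def Ph {d : ℕ} (h : ℝ) (a : EuclideanSpace ℝ (Fin d) → ℝ)
    (u : EuclideanSpace ℝ (Fin d) → ℂ) (x : EuclideanSpace ℝ (Fin d)) : ℂ :=
  -(h ^ 2 : ℂ) * lap u x - u x -
    Complex.I * (h : ℂ) *
      ((∑ i : Fin d, (fderiv ℝ a x (EuclideanSpace.single i (1 : ℝ)) : ℂ) * pd i u x) +
        (a x : ℂ) * lap u x)

open Filter Asymptotics

/-! Testing `P_h u = f` against `ū` and taking imaginary parts gives `h ∫ a|∇u|² ≤ ‖f‖‖u‖`, so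
`∫ a|∇u|² = o(1)`. Testing against `aū` and taking real parts expresses `∫ a|u|²` through
`h² ∫ a|∇u|²`, a cross term with `∇a·∇u` and a source term; since `|∇a| ≲ √a`, Cauchy–Schwarz
bounds the last two by quantities already controlled plus a multiple of `(∫ a|u|²)^{1/2}`, which
is absorbed. Hence `∫ a(|u|² + |h∇u|²) = o(h²)`. Both parts of the theorem lose only one power of
`h` against this: `1 ≤ a/(ch)` on `{a ≥ ch}`, and the cutoff `1 - χ(a/h)` is `O((a/h)^{1/2})`. -/

section CompactSupport

variable {X E F : Type*} [TopologicalSpace X] [R1Space X] [MeasurableSpace X]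
  [OpensMeasurableSpace X] {μ : Measure X} [IsFiniteMeasureOnCompacts μ] [Zero E]
  [NormedAddCommGroup F] {u : X → E} {f : X → F}

lemma integrable_of_notMem_tsupport (hf : Continuous f) (hus : HasCompactSupport u)
    (hf0 : ∀ x, x ∉ tsupport u → f x = 0) : Integrable f μ :=
  hf.integrable_of_hasCompactSupport (.intro hus hf0)

lemma memLp_two_of_notMem_tsupport (hf : Continuous f) (hus : HasCompactSupport u)
    (hf0 : ∀ x, x ∉ tsupport u → f x = 0) : MemLp f 2 μ :=
  hf.memLp_of_hasCompactSupport (.intro hus hf0)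

end CompactSupport

section PartialDerivatives

variable {d : ℕ} {b : EuclideanSpace ℝ (Fin d) → ℝ} {u v : EuclideanSpace ℝ (Fin d) → ℂ}
  {x : EuclideanSpace ℝ (Fin d)}

lemma contDiff_pd {m n : WithTop ℕ∞} (hu : ContDiff ℝ n u) (hmn : m + 1 ≤ n) (i : Fin d) :
    ContDiff ℝ m (pd i u) :=
  (hu.fderiv_right hmn).clm_apply contDiff_const

lemma continuous_pd (hu : ContDiff ℝ 1 u) (i : Fin d) : Continuous (pd i u) :=
  (contDiff_pd (m := 0) hu (by simp) i).continuous

lemma pd_eq_zero_of_notMem_tsupport (i : Fin d) (hx : x ∉ tsupport u) : pd i u x = 0 := by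
  rw [pd, (notMem_tsupport_iff_eventuallyEq.1 hx).fderiv_eq]
  simp

lemma tsupport_pd_subset (i : Fin d) : tsupport (pd i u) ⊆ tsupport u :=
  closure_minimal (fun _ hx => not_not.1 fun hxu => hx (pd_eq_zero_of_notMem_tsupport i hxu))
    (isClosed_tsupport u)

lemma hasCompactSupport_pd (hu : HasCompactSupport u) (i : Fin d) : HasCompactSupport (pd i u) :=
  hu.mono' ((subset_tsupport _).trans (tsupport_pd_subset i))

lemma pd_mul (hu : DifferentiableAt ℝ u x) (hv : DifferentiableAt ℝ v x) (i : Fin d) :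
    pd i (fun y => u y * v y) x = pd i u x * v x + u x * pd i v x := by
  simp only [pd, fderiv_fun_mul hu hv, add_apply, smul_apply, smul_eq_mul]
  ring

lemma pd_ofReal (hb : DifferentiableAt ℝ b x) (i : Fin d) :
    pd i (fun y => (b y : ℂ)) x = fderiv ℝ b x (EuclideanSpace.single i 1) := by
  have hcomp : HasFDerivAt (fun y => (b y : ℂ)) (ofRealCLM ∘L fderiv ℝ b x) x :=
    ofRealCLM.hasFDerivAt.comp x hb.hasFDerivAt
  simp [pd, hcomp.fderiv]

lemma pd_conj (i : Fin d) : pd i (fun y => conj (u y)) x = conj (pd i u x) :=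
  congrArg (fun L => L (EuclideanSpace.single i (1 : ℝ))) (fderiv_star (𝕜 := ℝ) (f := u) (x := x))

lemma integral_pd_mul_eq_neg (hu : ContDiff ℝ 1 u) (hus : HasCompactSupport u)
    (hv : ContDiff ℝ 1 v) (i : Fin d) : ∫ x, pd i u x * v x = -∫ x, u x * pd i v x := by
  have hu' := continuous_pd hu i
  have hv' := continuous_pd hv i
  rw [eq_comm, neg_eq_iff_eq_neg]
  exact integral_mul_fderiv_eq_neg_fderiv_mul_of_integrable
    ((hu'.mul hv.continuous).integrable_of_hasCompactSupport (hasCompactSupport_pd hus i).mul_right)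
    ((hu.continuous.mul hv').integrable_of_hasCompactSupport hus.mul_right)
    ((hu.continuous.mul hv.continuous).integrable_of_hasCompactSupport hus.mul_right)
    (fun x _ => hu.differentiable one_ne_zero x) (fun x _ => hv.differentiable one_ne_zero x)

lemma integral_sum_pd_mul_pd_mul_eq_neg {m : EuclideanSpace ℝ (Fin d) → ℂ} (hm : ContDiff ℝ 1 m)
    (hu : ContDiff ℝ 2 u) (hus : HasCompactSupport u) (hv : ContDiff ℝ 1 v) :
    ∫ x, (∑ i, pd i (fun y => m y * pd i u y) x) * v x =
      -∫ x, m x * ∑ i, pd i u x * pd i v x := by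
  have hF (i : Fin d) : ContDiff ℝ 1 fun y => m y * pd i u y :=
    hm.mul (contDiff_pd hu (by norm_num) i)
  have hFs (i : Fin d) : HasCompactSupport fun y => m y * pd i u y :=
    (hasCompactSupport_pd hus i).mul_left
  simp_rw [Finset.sum_mul, Finset.mul_sum, ← mul_assoc]
  rw [integral_finsetSum _ fun i _ => ?_, integral_finsetSum _ fun i _ => ?_,
    ← Finset.sum_neg_distrib]
  · exact Finset.sum_congr rfl fun i _ => integral_pd_mul_eq_neg (hF i) (hFs i) hv i
  · exact ((hF i).continuous.mul (continuous_pd hv i)).integrable_of_hasCompactSupport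
      (hFs i).mul_right
  · exact ((continuous_pd (hF i) i).mul hv.continuous).integrable_of_hasCompactSupport
      (hasCompactSupport_pd (hFs i) i).mul_right

end PartialDerivatives

section Gradients

variable {d : ℕ} {b : EuclideanSpace ℝ (Fin d) → ℝ} {u : EuclideanSpace ℝ (Fin d) → ℂ}
  {x : EuclideanSpace ℝ (Fin d)}

/-- The squared length `|∇u|²` of the gradient of a complex-valued function. -/
def gradNormSq (u : EuclideanSpace ℝ (Fin d) → ℂ) (x : EuclideanSpace ℝ (Fin d)) : ℝ :=
  ∑ i, ‖pd i u x‖ ^ 2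

/-- The pairing `∇b·∇u` of the gradients of a real-valued and a complex-valued function. -/
def gradPairing (b : EuclideanSpace ℝ (Fin d) → ℝ) (u : EuclideanSpace ℝ (Fin d) → ℂ)
    (x : EuclideanSpace ℝ (Fin d)) : ℂ :=
  ∑ i, (fderiv ℝ b x (EuclideanSpace.single i 1) : ℂ) * pd i u x

lemma gradNormSq_nonneg : 0 ≤ gradNormSq u x :=
  Finset.sum_nonneg fun _ _ => sq_nonneg _

lemma continuous_gradNormSq (hu : ContDiff ℝ 1 u) : Continuous (gradNormSq u) :=
  continuous_finsetSum _ fun i _ => (continuous_pd hu i).norm.pow 2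

lemma gradNormSq_eq_zero_of_notMem_tsupport (hx : x ∉ tsupport u) : gradNormSq u x = 0 := by
  simp [gradNormSq, pd_eq_zero_of_notMem_tsupport _ hx]

lemma continuous_gradPairing (hb : ContDiff ℝ 1 b) (hu : ContDiff ℝ 1 u) :
    Continuous (gradPairing b u) :=
  continuous_finsetSum _ fun i _ =>
    (continuous_ofReal.comp ((hb.continuous_fderiv one_ne_zero).clm_apply continuous_const)).mul
      (continuous_pd hu i)

lemma gradPairing_const (c : ℝ) : gradPairing (fun _ => c) u x = 0 := by
  simp [gradPairing]

lemma norm_gradient_eq_norm_fderiv : ‖gradient b x‖ = ‖fderiv ℝ b x‖ :=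
  LinearIsometryEquiv.norm_map _ _

lemma sum_sq_fderiv_single_eq_norm_gradient_sq :
    ∑ i, fderiv ℝ b x (EuclideanSpace.single i 1) ^ 2 = ‖gradient b x‖ ^ 2 := by
  simp [EuclideanSpace.norm_sq_eq, ← inner_gradient_left, EuclideanSpace.inner_single_right]

lemma norm_gradPairing_le : ‖gradPairing b u x‖ ≤ ‖gradient b x‖ * √(gradNormSq u x) := by
  calc ‖gradPairing b u x‖
      ≤ ∑ i, |fderiv ℝ b x (EuclideanSpace.single i 1)| * ‖pd i u x‖ :=
        (norm_sum_le _ _).trans_eq (by simp)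
    _ ≤ √(∑ i, |fderiv ℝ b x (EuclideanSpace.single i 1)| ^ 2) * √(gradNormSq u x) :=
        Real.sum_mul_le_sqrt_mul_sqrt _ _ _
    _ = ‖gradient b x‖ * √(gradNormSq u x) := by
        simp only [sq_abs, sum_sq_fderiv_single_eq_norm_gradient_sq,
          Real.sqrt_sq (norm_nonneg _)]

lemma pd_ofReal_mul (hb : DifferentiableAt ℝ b x) (hu : DifferentiableAt ℝ u x) (i : Fin d) :
    pd i (fun y => (b y : ℂ) * u y) x =
      fderiv ℝ b x (EuclideanSpace.single i 1) * u x + b x * pd i u x := by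
  have hbC : DifferentiableAt ℝ (fun y => (b y : ℂ)) x := ofRealCLM.differentiableAt.comp x hb
  rw [pd_mul hbC hu, pd_ofReal hb]

lemma sum_pd_mul_pd_ofReal_mul_conj (hb : DifferentiableAt ℝ b x) (hu : DifferentiableAt ℝ u x) :
    ∑ i, pd i u x * pd i (fun y => (b y : ℂ) * conj (u y)) x =
      (b x * gradNormSq u x : ℝ) + gradPairing b u x * conj (u x) := by
  have hterm (i : Fin d) : pd i u x * pd i (fun y => (b y : ℂ) * conj (u y)) x =
      b x * (‖pd i u x‖ : ℂ) ^ 2 +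
        fderiv ℝ b x (EuclideanSpace.single i 1) * pd i u x * conj (u x) := by
    rw [pd_ofReal_mul (u := fun y => conj (u y)) hb hu.star, pd_conj, ← mul_conj']
    ring
  simp_rw [hterm, Finset.sum_add_distrib, ← Finset.mul_sum, ← Finset.sum_mul]
  simp [gradNormSq, gradPairing]

lemma gradNormSq_ofReal_mul_le (hb : DifferentiableAt ℝ b x) (hu : DifferentiableAt ℝ u x) :
    gradNormSq (fun y => (b y : ℂ) * u y) x ≤
      2 * (‖gradient b x‖ ^ 2 * ‖u x‖ ^ 2 + b x ^ 2 * gradNormSq u x) := by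
  rw [← sum_sq_fderiv_single_eq_norm_gradient_sq, gradNormSq, gradNormSq, Finset.sum_mul,
    Finset.mul_sum, ← Finset.sum_add_distrib, Finset.mul_sum]
  refine Finset.sum_le_sum fun i _ => ?_
  rw [pd_ofReal_mul hb hu]
  calc ‖(fderiv ℝ b x (EuclideanSpace.single i 1) : ℂ) * u x + b x * pd i u x‖ ^ 2
      ≤ (|fderiv ℝ b x (EuclideanSpace.single i 1)| * ‖u x‖ + |b x| * ‖pd i u x‖) ^ 2 := by
        gcongr
        exact (norm_add_le _ _).trans_eq (by simp)
    _ ≤ 2 * ((|fderiv ℝ b x (EuclideanSpace.single i 1)| * ‖u x‖) ^ 2 +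
          (|b x| * ‖pd i u x‖) ^ 2) := add_sq_le
    _ = _ := by simp only [mul_pow, sq_abs]

end Gradients

section KelvinVoigtOperator

variable {d : ℕ} {h : ℝ} {a b : EuclideanSpace ℝ (Fin d) → ℝ}
  {u v : EuclideanSpace ℝ (Fin d) → ℂ} {x : EuclideanSpace ℝ (Fin d)}

/-- The complex coefficient `m = h² + i h a` for which `P_h u = -div(m ∇u) - u`. -/
def kvCoeff (h : ℝ) (a : EuclideanSpace ℝ (Fin d) → ℝ) (x : EuclideanSpace ℝ (Fin d)) : ℂ :=
  (h : ℂ) ^ 2 + I * h * a x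

lemma contDiff_kvCoeff {n : WithTop ℕ∞} (ha : ContDiff ℝ n a) : ContDiff ℝ n (kvCoeff h a) :=
  contDiff_const.add (contDiff_const.mul (ofRealCLM.contDiff.comp ha))

lemma pd_kvCoeff (ha : DifferentiableAt ℝ a x) (i : Fin d) :
    pd i (kvCoeff h a) x = I * h * fderiv ℝ a x (EuclideanSpace.single i 1) := by
  have haC : DifferentiableAt ℝ (fun y => (a y : ℂ)) x := ofRealCLM.differentiableAt.comp x ha
  rw [← pd_ofReal ha]
  unfold pd kvCoeff
  rw [fderiv_const_add, fderiv_const_mul haC, smul_apply, smul_eq_mul]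

lemma Ph_eq_neg_sum_pd_kvCoeff_mul_pd_sub (ha : ContDiff ℝ 1 a) (hu : ContDiff ℝ 2 u) :
    Ph h a u x = -∑ i, pd i (fun y => kvCoeff h a y * pd i u y) x - u x := by
  have had := ha.differentiable one_ne_zero x
  have hm := (contDiff_kvCoeff (h := h) ha).differentiable one_ne_zero x
  have hpd (i : Fin d) : pd i (fun y => kvCoeff h a y * pd i u y) x =
      I * h * (fderiv ℝ a x (EuclideanSpace.single i 1) * pd i u x) +
        kvCoeff h a x * pd i (pd i u) x := by
    rw [pd_mul hm ((contDiff_pd (m := 1) hu (by norm_num) i).differentiable one_ne_zero x),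
      pd_kvCoeff had]
    ring
  simp_rw [hpd, Finset.sum_add_distrib, ← Finset.mul_sum]
  rw [Ph, lap, kvCoeff]
  ring

lemma continuous_Ph (ha : ContDiff ℝ 1 a) (hu : ContDiff ℝ 2 u) : Continuous (Ph h a u) := by
  have hpu (i : Fin d) : ContDiff ℝ 1 (pd i u) := contDiff_pd hu (by norm_num) i
  have hlap : Continuous (lap u) :=
    continuous_finsetSum _ fun i _ => continuous_pd (hpu i) i
  have hgrad := continuous_gradPairing ha (hu.of_le one_le_two)
  exact ((continuous_const.mul hlap).sub hu.continuous).sub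
    (continuous_const.mul (hgrad.add ((continuous_ofReal.comp ha.continuous).mul hlap)))

lemma Ph_eq_zero_of_notMem_tsupport (hx : x ∉ tsupport u) : Ph h a u x = 0 := by
  have hpd (i : Fin d) : pd i (pd i u) x = 0 :=
    pd_eq_zero_of_notMem_tsupport i fun hx' => hx (tsupport_pd_subset i hx')
  simp [Ph, lap, hpd, pd_eq_zero_of_notMem_tsupport _ hx, image_eq_zero_of_notMem_tsupport hx]

lemma integral_Ph_mul_eq (ha : ContDiff ℝ 1 a) (hu : ContDiff ℝ 2 u) (hus : HasCompactSupport u)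
    (hv : ContDiff ℝ 1 v) :
    ∫ x, Ph h a u x * v x =
      (∫ x, kvCoeff h a x * ∑ i, pd i u x * pd i v x) - ∫ x, u x * v x := by
  have hm : ContDiff ℝ 1 (kvCoeff h a) := contDiff_kvCoeff ha
  have hF (i : Fin d) : ContDiff ℝ 1 fun y => kvCoeff h a y * pd i u y :=
    hm.mul (contDiff_pd hu (by norm_num) i)
  have hdiv : Integrable fun x => (∑ i, pd i (fun y => kvCoeff h a y * pd i u y) x) * v x := by
    refine integrable_of_notMem_tsupport
      ((continuous_finsetSum _ fun i _ => continuous_pd (hF i) i).mul hv.continuous) hus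
      fun x hx => ?_
    have hpd (i : Fin d) : pd i (fun y => kvCoeff h a y * pd i u y) x = 0 :=
      pd_eq_zero_of_notMem_tsupport i fun hx' => hx
        (tsupport_pd_subset i (tsupport_mul_subset_right hx'))
    simp [hpd]
  have huv : Integrable fun x => u x * v x :=
    (hu.continuous.mul hv.continuous).integrable_of_hasCompactSupport hus.mul_right
  simp_rw [Ph_eq_neg_sum_pd_kvCoeff_mul_pd_sub ha hu, sub_mul, neg_mul]
  rw [integral_sub hdiv.fun_neg huv, integral_neg,
    integral_sum_pd_mul_pd_mul_eq_neg hm hu hus hv, neg_neg]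

lemma kvCoeff_mul_sum_pd_mul_pd_eq (hb : DifferentiableAt ℝ b x) (hu : DifferentiableAt ℝ u x) :
    kvCoeff h a x * ∑ i, pd i u x * pd i (fun y => (b y : ℂ) * conj (u y)) x =
      (h : ℂ) ^ 2 * (b x * gradNormSq u x : ℝ) + I * h * (a x * b x * gradNormSq u x : ℝ) +
        kvCoeff h a x * (gradPairing b u x * conj (u x)) := by
  rw [sum_pd_mul_pd_ofReal_mul_conj hb hu, mul_add, kvCoeff]
  push_cast
  ring

lemma integral_Ph_mul_ofReal_mul_conj_eq (ha : ContDiff ℝ 1 a) (hb : ContDiff ℝ 1 b)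
    (hu : ContDiff ℝ 2 u) (hus : HasCompactSupport u) :
    ∫ x, Ph h a u x * (b x * conj (u x)) =
      (h ^ 2 * ∫ x, b x * gradNormSq u x : ℝ) + I * (h * ∫ x, a x * b x * gradNormSq u x : ℝ) +
        (∫ x, kvCoeff h a x * (gradPairing b u x * conj (u x))) -
        (∫ x, b x * ‖u x‖ ^ 2 : ℝ) := by
  have hu1 : ContDiff ℝ 1 u := hu.of_le one_le_two
  have huc := hu.continuous
  have hgc := continuous_gradNormSq hu1
  have hmc := (contDiff_kvCoeff (h := h) ha).continuous
  have hpc := continuous_gradPairing hb hu1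
  have hv : ContDiff ℝ 1 fun y => (b y : ℂ) * conj (u y) :=
    (ofRealCLM.contDiff.comp hb).mul (conjCLE.contDiff.comp hu1)
  have hgrad (w : EuclideanSpace ℝ (Fin d) → ℝ) (hw : Continuous w) (c : ℂ) :
      Integrable fun x => c * ((w x * gradNormSq u x : ℝ) : ℂ) :=
    integrable_of_notMem_tsupport (by fun_prop) hus
      fun x hx => by simp [gradNormSq_eq_zero_of_notMem_tsupport hx]
  have hgradb := hgrad b hb.continuous (h ^ 2)
  have hgradab := hgrad (fun x => a x * b x) (ha.continuous.mul hb.continuous) (I * h)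
  have hcross : Integrable fun x => kvCoeff h a x * (gradPairing b u x * conj (u x)) :=
    integrable_of_notMem_tsupport (by fun_prop) hus
      fun x hx => by simp [image_eq_zero_of_notMem_tsupport hx]
  have hmass (x) : u x * (b x * conj (u x)) = (b x * ‖u x‖ ^ 2 : ℝ) := by
    rw [mul_left_comm, mul_conj', ofReal_mul, ofReal_pow]
  rw [integral_Ph_mul_eq ha hu hus hv]
  simp_rw [kvCoeff_mul_sum_pd_mul_pd_eq (hb.differentiable one_ne_zero _)
    (hu1.differentiable one_ne_zero _), hmass]
  rw [integral_add (hgradb.fun_add hgradab) hcross, integral_add hgradb hgradab, integral_const_mul,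
    integral_const_mul]
  simp only [← integral_complex_ofReal, ofReal_mul, ofReal_pow, mul_assoc]

end KelvinVoigtOperator

section CauchySchwarz

variable {α E F G : Type*} [MeasurableSpace α] {μ : Measure α} [NormedAddCommGroup E]
  [NormedAddCommGroup F] [NormedAddCommGroup G] {f : α → E} {g : α → F}

lemma integral_norm_mul_norm_le_sqrt_mul_sqrt (hf : MemLp f 2 μ) (hg : MemLp g 2 μ) :
    ∫ x, ‖f x‖ * ‖g x‖ ∂μ ≤ √(∫ x, ‖f x‖ ^ 2 ∂μ) * √(∫ x, ‖g x‖ ^ 2 ∂μ) := by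
  simpa [Real.sqrt_eq_rpow] using integral_mul_norm_le_Lp_mul_Lq (μ := μ)
    Real.HolderConjugate.two_two (f := fun x => ‖f x‖) (g := fun x => ‖g x‖)
    (by simpa using hf.norm) (by simpa using hg.norm)

lemma norm_integral_le_mul_sqrt_mul_sqrt [NormedSpace ℝ G] {φ : α → G} {c : ℝ} (hc : 0 ≤ c)
    (hf : MemLp f 2 μ) (hg : MemLp g 2 μ) (hφ : ∀ x, ‖φ x‖ ≤ c * (‖f x‖ * ‖g x‖)) :
    ‖∫ x, φ x ∂μ‖ ≤ c * (√(∫ x, ‖f x‖ ^ 2 ∂μ) * √(∫ x, ‖g x‖ ^ 2 ∂μ)) := by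
  refine (norm_integral_le_of_norm_le ((hf.norm.integrable_mul hg.norm).const_mul c)
    (.of_forall hφ)).trans ?_
  rw [integral_const_mul]
  exact mul_le_mul_of_nonneg_left (integral_norm_mul_norm_le_sqrt_mul_sqrt hf hg) hc

end CauchySchwarz

section EnergyEstimates

variable {d : ℕ} {h C K : ℝ} {a : EuclideanSpace ℝ (Fin d) → ℝ}
  {u : EuclideanSpace ℝ (Fin d) → ℂ} {x : EuclideanSpace ℝ (Fin d)}

lemma mul_integral_damping_mul_gradNormSq_le (ha : ContDiff ℝ 1 a) (hu : ContDiff ℝ 2 u)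
    (hus : HasCompactSupport u) :
    h * ∫ x, a x * gradNormSq u x ≤ √(∫ x, ‖Ph h a u x‖ ^ 2) * √(∫ x, ‖u x‖ ^ 2) := by
  have him : (∫ x, Ph h a u x * conj (u x)).im = h * ∫ x, a x * gradNormSq u x := by
    simpa [gradPairing_const, ← ofReal_pow] using
      congrArg im (integral_Ph_mul_ofReal_mul_conj_eq (h := h) ha (contDiff_const (c := 1)) hu hus)
  rw [← him, ← one_mul (√_ * √_)]
  refine ((le_abs_self _).trans (abs_im_le_norm _)).trans
    (norm_integral_le_mul_sqrt_mul_sqrt zero_le_one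
      (memLp_two_of_notMem_tsupport (continuous_Ph ha hu) hus
        fun _ => Ph_eq_zero_of_notMem_tsupport)
      (hu.continuous.memLp_of_hasCompactSupport hus) fun x => ?_)
  simp

lemma norm_sqrt_mul_sq {s : ℝ} (hs : 0 ≤ s) (r : ℝ) : ‖√s * r‖ ^ 2 = s * r ^ 2 := by
  rw [Real.norm_eq_abs, sq_abs, mul_pow, Real.sq_sqrt hs]

lemma norm_sqrt_mul_sqrt_gradNormSq_sq (hax : 0 ≤ a x) :
    ‖√(a x) * √(gradNormSq u x)‖ ^ 2 = a x * gradNormSq u x := by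
  rw [norm_sqrt_mul_sq hax, Real.sq_sqrt gradNormSq_nonneg]

lemma memLp_two_sqrt_mul_norm (ha : Continuous a) (hu : Continuous u) (hus : HasCompactSupport u) :
    MemLp (fun x => √(a x) * ‖u x‖) 2 :=
  memLp_two_of_notMem_tsupport (by fun_prop) hus
    fun x hx => by simp [image_eq_zero_of_notMem_tsupport hx]

lemma memLp_two_sqrt_mul_sqrt_gradNormSq (ha : Continuous a) (hu : ContDiff ℝ 1 u)
    (hus : HasCompactSupport u) : MemLp (fun x => √(a x) * √(gradNormSq u x)) 2 :=
  memLp_two_of_notMem_tsupport (by have := continuous_gradNormSq hu; fun_prop) hus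
    fun x hx => by simp [gradNormSq_eq_zero_of_notMem_tsupport hx]

lemma norm_integral_Ph_mul_damping_mul_conj_le (ha : ContDiff ℝ 1 a) (ha0 : ∀ x, 0 ≤ a x)
    (haC : ∀ x, a x ≤ C) (hu : ContDiff ℝ 2 u) (hus : HasCompactSupport u) :
    ‖∫ x, Ph h a u x * (a x * conj (u x))‖ ≤
      √C * (√(∫ x, ‖Ph h a u x‖ ^ 2) * √(∫ x, a x * ‖u x‖ ^ 2)) := by
  simp_rw [← norm_sqrt_mul_sq (ha0 _)]
  refine norm_integral_le_mul_sqrt_mul_sqrt (Real.sqrt_nonneg C)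
    (memLp_two_of_notMem_tsupport (continuous_Ph ha hu) hus
      fun _ => Ph_eq_zero_of_notMem_tsupport)
    (memLp_two_sqrt_mul_norm ha.continuous hu.continuous hus) fun x => ?_
  calc ‖Ph h a u x * (a x * conj (u x))‖
      = √(a x) * (‖Ph h a u x‖ * (√(a x) * ‖u x‖)) := by
        simp only [norm_mul, norm_real, Real.norm_of_nonneg (ha0 x), RCLike.norm_conj]
        linear_combination (-‖Ph h a u x‖ * ‖u x‖) * Real.mul_self_sqrt (ha0 x)
    _ ≤ √C * (‖Ph h a u x‖ * (√(a x) * ‖u x‖)) := by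
        gcongr
        exact haC x
    _ = √C * (‖Ph h a u x‖ * ‖√(a x) * ‖u x‖‖) := by
        rw [Real.norm_of_nonneg (by positivity : 0 ≤ √(a x) * ‖u x‖)]

lemma norm_gradPairing_damping_mul_conj_le (haK : ∀ x, ‖gradient a x‖ ≤ K * √(a x)) :
    ‖gradPairing a u x * conj (u x)‖ ≤ K * (‖√(a x) * √(gradNormSq u x)‖ * ‖u x‖) := by
  calc ‖gradPairing a u x * conj (u x)‖
      ≤ ‖gradient a x‖ * √(gradNormSq u x) * ‖u x‖ := by
        rw [norm_mul, RCLike.norm_conj]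
        gcongr
        exact norm_gradPairing_le
    _ ≤ K * √(a x) * √(gradNormSq u x) * ‖u x‖ := by
        gcongr
        exact haK x
    _ = K * (‖√(a x) * √(gradNormSq u x)‖ * ‖u x‖) := by
        rw [Real.norm_of_nonneg (by positivity : 0 ≤ √(a x) * √(gradNormSq u x))]
        ring

lemma norm_integral_gradPairing_damping_mul_conj_le (ha : Continuous a) (ha0 : ∀ x, 0 ≤ a x)
    (hK : 0 ≤ K) (haK : ∀ x, ‖gradient a x‖ ≤ K * √(a x)) (hu : ContDiff ℝ 1 u)
    (hus : HasCompactSupport u) :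
    ‖∫ x, gradPairing a u x * conj (u x)‖ ≤
      K * (√(∫ x, a x * gradNormSq u x) * √(∫ x, ‖u x‖ ^ 2)) := by
  simp_rw [← norm_sqrt_mul_sqrt_gradNormSq_sq (ha0 _)]
  exact norm_integral_le_mul_sqrt_mul_sqrt hK (memLp_two_sqrt_mul_sqrt_gradNormSq ha hu hus)
    (hu.continuous.memLp_of_hasCompactSupport hus)
    fun x => norm_gradPairing_damping_mul_conj_le haK

lemma norm_integral_damping_mul_gradPairing_mul_conj_le (ha : Continuous a)
    (ha0 : ∀ x, 0 ≤ a x) (haC : ∀ x, a x ≤ C) (hK : 0 ≤ K)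
    (haK : ∀ x, ‖gradient a x‖ ≤ K * √(a x)) (hu : ContDiff ℝ 1 u) (hus : HasCompactSupport u) :
    ‖∫ x, a x * (gradPairing a u x * conj (u x))‖ ≤
      √C * K * (√(∫ x, a x * gradNormSq u x) * √(∫ x, a x * ‖u x‖ ^ 2)) := by
  simp_rw [← norm_sqrt_mul_sqrt_gradNormSq_sq (ha0 _), ← norm_sqrt_mul_sq (ha0 _)]
  refine norm_integral_le_mul_sqrt_mul_sqrt (by positivity)
    (memLp_two_sqrt_mul_sqrt_gradNormSq ha hu hus)
    (memLp_two_sqrt_mul_norm ha hu.continuous hus) fun x => ?_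
  calc ‖a x * (gradPairing a u x * conj (u x))‖
      = √(a x) * √(a x) * ‖gradPairing a u x * conj (u x)‖ := by
        rw [norm_mul, norm_real, Real.norm_of_nonneg (ha0 x), Real.mul_self_sqrt (ha0 x)]
    _ ≤ √C * √(a x) * (K * (‖√(a x) * √(gradNormSq u x)‖ * ‖u x‖)) := by
        gcongr
        · exact haC x
        · exact norm_gradPairing_damping_mul_conj_le haK
    _ = √C * K * (‖√(a x) * √(gradNormSq u x)‖ * ‖√(a x) * ‖u x‖‖) := by
        rw [Real.norm_of_nonneg (by positivity : 0 ≤ √(a x) * ‖u x‖)]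
        ring

lemma norm_integral_kvCoeff_mul_gradPairing_mul_conj_le (ha : ContDiff ℝ 1 a)
    (ha0 : ∀ x, 0 ≤ a x) (haC : ∀ x, a x ≤ C) (hK : 0 ≤ K)
    (haK : ∀ x, ‖gradient a x‖ ≤ K * √(a x)) (hu : ContDiff ℝ 1 u) (hus : HasCompactSupport u)
    (hh : 0 ≤ h) :
    ‖∫ x, kvCoeff h a x * (gradPairing a u x * conj (u x))‖ ≤
      h ^ 2 * (K * (√(∫ x, a x * gradNormSq u x) * √(∫ x, ‖u x‖ ^ 2))) +
      h * (√C * K * (√(∫ x, a x * gradNormSq u x) * √(∫ x, a x * ‖u x‖ ^ 2))) := by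
  have hac := ha.continuous
  have huc := hu.continuous
  have hpc := continuous_gradPairing ha hu
  have hint (w : EuclideanSpace ℝ (Fin d) → ℂ) (hw : Continuous w) :
      Integrable fun x => w x * (gradPairing a u x * conj (u x)) :=
    integrable_of_notMem_tsupport (by fun_prop) hus
      fun x hx => by simp [image_eq_zero_of_notMem_tsupport hx]
  simp_rw [kvCoeff, add_mul]
  rw [integral_add (hint _ continuous_const) (hint _ (by fun_prop))]
  simp_rw [mul_assoc (I * h), integral_const_mul]
  refine (norm_add_le _ _).trans ?_
  simp only [norm_mul, norm_pow, norm_I, norm_real, Real.norm_of_nonneg hh, one_mul]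
  gcongr
  · exact norm_integral_gradPairing_damping_mul_conj_le hac ha0 hK haK hu hus
  · exact norm_integral_damping_mul_gradPairing_mul_conj_le hac ha0 haC hK haK hu hus

lemma integral_damping_mul_norm_sq_le (ha : ContDiff ℝ 1 a) (ha0 : ∀ x, 0 ≤ a x)
    (haC : ∀ x, a x ≤ C) (hK : 0 ≤ K) (haK : ∀ x, ‖gradient a x‖ ≤ K * √(a x))
    (hu : ContDiff ℝ 2 u) (hus : HasCompactSupport u) (hh : 0 ≤ h) :
    ∫ x, a x * ‖u x‖ ^ 2 ≤
      2 * (h ^ 2 * (∫ x, a x * gradNormSq u x) +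
        h ^ 2 * (K * (√(∫ x, a x * gradNormSq u x) * √(∫ x, ‖u x‖ ^ 2)))) +
      C * (h * K * √(∫ x, a x * gradNormSq u x) + √(∫ x, ‖Ph h a u x‖ ^ 2)) ^ 2 := by
  have hC : 0 ≤ C := (ha0 0).trans (haC 0)
  have hA : 0 ≤ ∫ x, a x * ‖u x‖ ^ 2 :=
    integral_nonneg fun x => mul_nonneg (ha0 x) (sq_nonneg _)
  have hre := congrArg re (integral_Ph_mul_ofReal_mul_conj_eq (h := h) ha ha hu hus)
  simp only [sub_re, add_re, ofReal_re, re_mul_ofReal, I_re, zero_mul, add_zero] at hre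
  have hsource := (neg_le_abs _).trans ((abs_re_le_norm _).trans
    (norm_integral_Ph_mul_damping_mul_conj_le (h := h) ha ha0 haC hu hus))
  have hcross := (re_le_norm _).trans (norm_integral_kvCoeff_mul_gradPairing_mul_conj_le ha ha0
    haC hK haK (hu.of_le one_le_two) hus hh)
  set A := ∫ x, a x * ‖u x‖ ^ 2
  set B := ∫ x, a x * gradNormSq u x
  set S := √(∫ x, ‖Ph h a u x‖ ^ 2)
  set t := h * K * √B + S with ht
  have habsorb : 2 * (√C * t * √A) ≤ C * t ^ 2 + A := by
    have h2 := two_mul_le_add_sq (√C * t) (√A)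
    rw [mul_pow, Real.sq_sqrt hC, Real.sq_sqrt hA] at h2
    linarith
  linarith [show √C * t * √A = h * (√C * K * (√B * √A)) + √C * (S * √A) by rw [ht]; ring]

end EnergyEstimates

section DampedEnergy

variable {d : ℕ} {h : ℝ} {a : EuclideanSpace ℝ (Fin d) → ℝ}
  {u : EuclideanSpace ℝ (Fin d) → ℂ} {x : EuclideanSpace ℝ (Fin d)}

/-- The semiclassical energy density `|u|² + |h∇u|²`. -/
def energyDensity (h : ℝ) (u : EuclideanSpace ℝ (Fin d) → ℂ) (x : EuclideanSpace ℝ (Fin d)) : ℝ :=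
  ‖u x‖ ^ 2 + ∑ i, ‖(h : ℂ) * pd i u x‖ ^ 2

/-- The semiclassical energy `∫ a(|u|² + |h∇u|²)` weighted by the damping `a`. -/
def dampedEnergy (h : ℝ) (a : EuclideanSpace ℝ (Fin d) → ℝ)
    (u : EuclideanSpace ℝ (Fin d) → ℂ) : ℝ :=
  ∫ x, a x * energyDensity h u x

lemma energyDensity_eq : energyDensity h u x = ‖u x‖ ^ 2 + h ^ 2 * gradNormSq u x := by
  simp [energyDensity, gradNormSq, mul_pow, Finset.mul_sum]

lemma energyDensity_nonneg : 0 ≤ energyDensity h u x := by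
  rw [energyDensity]
  positivity

lemma norm_sq_le_energyDensity : ‖u x‖ ^ 2 ≤ energyDensity h u x :=
  le_add_of_nonneg_right (by positivity)

lemma sum_norm_mul_pd_sq_le_energyDensity :
    ∑ i, ‖(h : ℂ) * pd i u x‖ ^ 2 ≤ energyDensity h u x :=
  le_add_of_nonneg_left (sq_nonneg _)

lemma integrable_damping_mul_norm_sq (ha : Continuous a) (hu : Continuous u)
    (hus : HasCompactSupport u) : Integrable fun x => a x * ‖u x‖ ^ 2 :=
  integrable_of_notMem_tsupport (by fun_prop) hus
    fun x hx => by simp [image_eq_zero_of_notMem_tsupport hx]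

lemma integrable_damping_mul_gradNormSq (ha : Continuous a) (hu : ContDiff ℝ 1 u)
    (hus : HasCompactSupport u) : Integrable fun x => a x * gradNormSq u x :=
  integrable_of_notMem_tsupport (ha.mul (continuous_gradNormSq hu)) hus
    fun x hx => by simp [gradNormSq_eq_zero_of_notMem_tsupport hx]

lemma damping_mul_energyDensity_eq :
    a x * energyDensity h u x = a x * ‖u x‖ ^ 2 + h ^ 2 * (a x * gradNormSq u x) := by
  rw [energyDensity_eq]
  ring

lemma integrable_damping_mul_energyDensity (ha : Continuous a) (hu : ContDiff ℝ 1 u)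
    (hus : HasCompactSupport u) : Integrable fun x => a x * energyDensity h u x := by
  simp_rw [damping_mul_energyDensity_eq]
  exact (integrable_damping_mul_norm_sq ha hu.continuous hus).add
    ((integrable_damping_mul_gradNormSq ha hu hus).const_mul _)

lemma dampedEnergy_eq (ha : Continuous a) (hu : ContDiff ℝ 1 u) (hus : HasCompactSupport u) :
    dampedEnergy h a u = (∫ x, a x * ‖u x‖ ^ 2) + h ^ 2 * ∫ x, a x * gradNormSq u x := by
  simp_rw [dampedEnergy, damping_mul_energyDensity_eq]
  rw [integral_add (integrable_damping_mul_norm_sq ha hu.continuous hus)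
    ((integrable_damping_mul_gradNormSq ha hu hus).const_mul _), integral_const_mul]

lemma integral_le_mul_dampedEnergy (ha : Continuous a) (hu : ContDiff ℝ 1 u)
    (hus : HasCompactSupport u) {f : EuclideanSpace ℝ (Fin d) → ℝ} {c : ℝ} (hf0 : ∀ x, 0 ≤ f x)
    (hf : ∀ x, f x ≤ c * (a x * energyDensity h u x)) : ∫ x, f x ≤ c * dampedEnergy h a u := by
  rw [dampedEnergy, ← integral_const_mul]
  exact integral_mono_of_nonneg (.of_forall hf0)
    ((integrable_damping_mul_energyDensity ha hu hus).const_mul c) (.of_forall hf)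

lemma setIntegral_energyDensity_le (ha : Continuous a) (ha0 : ∀ x, 0 ≤ a x)
    (hu : ContDiff ℝ 1 u) (hus : HasCompactSupport u) {δ : ℝ} (hδ : 0 < δ) :
    ∫ x in {x | δ ≤ a x}, energyDensity h u x ≤ δ⁻¹ * dampedEnergy h a u := by
  rw [← integral_indicator (measurableSet_le measurable_const ha.measurable)]
  refine integral_le_mul_dampedEnergy ha hu hus
    (Set.indicator_nonneg fun _ _ => energyDensity_nonneg)
    fun x => Set.indicator_apply_le' (fun hx => ?_) fun _ => ?_
  · rw [← mul_assoc]
    exact le_mul_of_one_le_left energyDensity_nonneg ((one_le_inv_mul₀ hδ).2 hx)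
  · exact mul_nonneg (inv_nonneg.2 hδ.le) (mul_nonneg (ha0 x) energyDensity_nonneg)

end DampedEnergy

section Cutoff

variable {d : ℕ} {h K L M : ℝ} {a : EuclideanSpace ℝ (Fin d) → ℝ} {χ : ℝ → ℝ}
  {u : EuclideanSpace ℝ (Fin d) → ℂ} {x : EuclideanSpace ℝ (Fin d)}

lemma one_sub_sq_le_mul {z : ℝ} (hχM : ∀ z, |1 - χ z| ≤ M)
    (hχ1 : ∀ z ∈ Set.Icc (0 : ℝ) 1, χ z = 1) (hz : 0 ≤ z) : (1 - χ z) ^ 2 ≤ M ^ 2 * z := by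
  rcases le_total z 1 with hz1 | hz1
  · rw [hχ1 z ⟨hz, hz1⟩]
    simpa using mul_nonneg (sq_nonneg M) hz
  · rw [← sq_abs]
    exact (pow_le_pow_left₀ (abs_nonneg _) (hχM z) 2).trans
      (le_mul_of_one_le_right (sq_nonneg M) hz1)

lemma hasFDerivAt_one_sub_comp_div (had : DifferentiableAt ℝ a x) (hχ : Differentiable ℝ χ) :
    HasFDerivAt (fun y => 1 - χ (a y / h)) (-((deriv χ (a x / h) * h⁻¹) • fderiv ℝ a x)) x := by
  simp_rw [div_eq_mul_inv]
  rw [← smul_smul]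
  exact ((hχ (a x * h⁻¹)).hasDerivAt.comp_hasFDerivAt x
    (had.hasFDerivAt.mul_const h⁻¹)).const_sub 1

lemma norm_gradient_one_sub_comp_div_sq_le (had : DifferentiableAt ℝ a x) (hax : 0 ≤ a x)
    (haK : ‖gradient a x‖ ≤ K * √(a x)) (hχ : Differentiable ℝ χ) (hχL : ∀ z, |deriv χ z| ≤ L) :
    ‖gradient (fun y => 1 - χ (a y / h)) x‖ ^ 2 ≤ L ^ 2 * K ^ 2 * (h⁻¹) ^ 2 * a x := by
  rw [norm_gradient_eq_norm_fderiv, (hasFDerivAt_one_sub_comp_div had hχ).fderiv, norm_neg,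
    norm_smul, ← norm_gradient_eq_norm_fderiv, norm_mul]
  calc (‖deriv χ (a x / h)‖ * ‖h⁻¹‖ * ‖gradient a x‖) ^ 2
      ≤ (L * ‖h⁻¹‖ * (K * √(a x))) ^ 2 := by
        have hL : 0 ≤ L := (abs_nonneg _).trans (hχL 0)
        gcongr
        exact hχL _
    _ = L ^ 2 * K ^ 2 * (h⁻¹) ^ 2 * a x := by
        simp only [mul_pow, Real.sq_sqrt hax, Real.norm_eq_abs, sq_abs]
        ring

lemma energyDensity_one_sub_comp_div_mul_le (had : DifferentiableAt ℝ a x) (hax : 0 ≤ a x)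
    (haK : ‖gradient a x‖ ≤ K * √(a x)) (hχ : Differentiable ℝ χ) (hχM : ∀ z, |1 - χ z| ≤ M)
    (hχL : ∀ z, |deriv χ z| ≤ L) (hχ1 : ∀ z ∈ Set.Icc (0 : ℝ) 1, χ z = 1)
    (hu : DifferentiableAt ℝ u x) (hh : 0 < h) :
    energyDensity h (fun y => ((1 - χ (a y / h) : ℝ) : ℂ) * u y) x ≤
      2 * (M ^ 2 + L ^ 2 * K ^ 2 * h) * h⁻¹ * (a x * energyDensity h u x) := by
  have hcut : (1 - χ (a x / h)) ^ 2 ≤ M ^ 2 * (a x / h) :=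
    one_sub_sq_le_mul hχM hχ1 (div_nonneg hax hh.le)
  have hgrad := norm_gradient_one_sub_comp_div_sq_le (h := h) had hax haK hχ hχL
  have hg : 0 ≤ gradNormSq u x := gradNormSq_nonneg
  have hslack : 0 ≤ M ^ 2 * h⁻¹ * a x * ‖u x‖ ^ 2 +
      2 * (L ^ 2 * K ^ 2 * a x) * (h ^ 2 * gradNormSq u x) := by positivity
  rw [energyDensity_eq, energyDensity_eq, norm_mul, mul_pow, norm_real, Real.norm_eq_abs, sq_abs]
  calc (1 - χ (a x / h)) ^ 2 * ‖u x‖ ^ 2 +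
        h ^ 2 * gradNormSq (fun y => ((1 - χ (a y / h) : ℝ) : ℂ) * u y) x
      ≤ (1 - χ (a x / h)) ^ 2 * ‖u x‖ ^ 2 +
        h ^ 2 * (2 * (‖gradient (fun y => 1 - χ (a y / h)) x‖ ^ 2 * ‖u x‖ ^ 2 +
          (1 - χ (a x / h)) ^ 2 * gradNormSq u x)) := by
        gcongr
        exact gradNormSq_ofReal_mul_le (hasFDerivAt_one_sub_comp_div had hχ).differentiableAt hu
    _ ≤ M ^ 2 * (a x / h) * ‖u x‖ ^ 2 +
        h ^ 2 * (2 * (L ^ 2 * K ^ 2 * (h⁻¹) ^ 2 * a x * ‖u x‖ ^ 2 +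
          M ^ 2 * (a x / h) * gradNormSq u x)) := by
        gcongr
    _ ≤ _ := by
        refine (le_add_of_nonneg_right hslack).trans_eq ?_
        field_simp
        ring

end Cutoff

section SemiclassicalLimit

variable {ι : Type*} {l : Filter ι} {d : ℕ} {h : ι → ℝ} {C K L M : ℝ}
  {a : EuclideanSpace ℝ (Fin d) → ℝ} {u : ι → EuclideanSpace ℝ (Fin d) → ℂ}

lemma isBigO_one_sqrt {f : ι → ℝ} (hf : f =O[l] fun _ => (1 : ℝ)) :
    (fun n => √(f n)) =O[l] fun _ => (1 : ℝ) := by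
  simpa using hf.sqrt (.of_forall fun _ => zero_le_one)

lemma integral_damping_mul_gradNormSq_isLittleO_one (ha : ContDiff ℝ 1 a) (ha0 : ∀ x, 0 ≤ a x)
    (hh : ∀ n, 0 < h n) (hu : ∀ n, ContDiff ℝ 2 (u n)) (hus : ∀ n, HasCompactSupport (u n))
    (hmass : (fun n => ∫ x, ‖u n x‖ ^ 2) =O[l] fun _ => (1 : ℝ))
    (hf : (fun n => √(∫ x, ‖Ph (h n) a (u n) x‖ ^ 2)) =o[l] h) :
    (fun n => ∫ x, a x * gradNormSq (u n) x) =o[l] fun _ => (1 : ℝ) := by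
  have hdissipation : (fun n => h n * ∫ x, a x * gradNormSq (u n) x) =o[l] h := by
    refine IsBigO.trans_isLittleO (.of_norm_le fun n => ?_)
      (by simpa using hf.mul_isBigO (isBigO_one_sqrt hmass))
    rw [Real.norm_of_nonneg (mul_nonneg (hh n).le
      (integral_nonneg fun x => mul_nonneg (ha0 x) gradNormSq_nonneg))]
    exact mul_integral_damping_mul_gradNormSq_le ha (hu n) (hus n)
  simpa [(hh _).ne'] using (isBigO_refl (fun n => (h n)⁻¹) l).mul_isLittleO hdissipation

lemma integral_damping_mul_norm_sq_isLittleO_sq (ha : ContDiff ℝ 1 a) (ha0 : ∀ x, 0 ≤ a x)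
    (haC : ∀ x, a x ≤ C) (hK : 0 ≤ K) (haK : ∀ x, ‖gradient a x‖ ≤ K * √(a x))
    (hh : ∀ n, 0 < h n) (hu : ∀ n, ContDiff ℝ 2 (u n)) (hus : ∀ n, HasCompactSupport (u n))
    (hmass : (fun n => ∫ x, ‖u n x‖ ^ 2) =O[l] fun _ => (1 : ℝ))
    (hf : (fun n => √(∫ x, ‖Ph (h n) a (u n) x‖ ^ 2)) =o[l] h) :
    (fun n => ∫ x, a x * ‖u n x‖ ^ 2) =o[l] fun n => h n ^ 2 := by
  have hB := integral_damping_mul_gradNormSq_isLittleO_one ha ha0 hh hu hus hmass hf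
  have hsqrtB : (fun n => √(∫ x, a x * gradNormSq (u n) x)) =o[l] fun _ => (1 : ℝ) := by
    simpa using hB.sqrt (.of_forall fun _ => zero_le_one)
  have hsq := isBigO_refl (fun n => h n ^ 2) l
  have hmain := hsq.mul_isLittleO hB
  have hcross := hsq.mul_isLittleO
    ((hsqrtB.mul_isBigO (isBigO_one_sqrt hmass)).const_mul_left K)
  have hsource : (fun n => h n * K * √(∫ x, a x * gradNormSq (u n) x) +
      √(∫ x, ‖Ph (h n) a (u n) x‖ ^ 2)) =o[l] h := by
    refine IsLittleO.add ?_ hf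
    simpa [mul_assoc] using (isBigO_refl h l).mul_isLittleO (hsqrtB.const_mul_left K)
  simp only [mul_one] at hmain hcross
  refine IsBigO.trans_isLittleO (.of_norm_le fun n => ?_)
    (((hmain.add hcross).const_mul_left 2).add ((hsource.pow two_pos).const_mul_left C))
  rw [Real.norm_of_nonneg (integral_nonneg fun x => mul_nonneg (ha0 x) (sq_nonneg _))]
  exact integral_damping_mul_norm_sq_le ha ha0 haC hK haK (hu n) (hus n) (hh n).le

lemma dampedEnergy_isLittleO_sq (ha : ContDiff ℝ 1 a) (ha0 : ∀ x, 0 ≤ a x)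
    (haC : ∀ x, a x ≤ C) (hK : 0 ≤ K) (haK : ∀ x, ‖gradient a x‖ ≤ K * √(a x))
    (hh : ∀ n, 0 < h n) (hu : ∀ n, ContDiff ℝ 2 (u n)) (hus : ∀ n, HasCompactSupport (u n))
    (hmass : (fun n => ∫ x, ‖u n x‖ ^ 2) =O[l] fun _ => (1 : ℝ))
    (hf : (fun n => √(∫ x, ‖Ph (h n) a (u n) x‖ ^ 2)) =o[l] h) :
    (fun n => dampedEnergy (h n) a (u n)) =o[l] fun n => h n ^ 2 := by
  simp_rw [dampedEnergy_eq ha.continuous ((hu _).of_le one_le_two) (hus _)]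
  refine (integral_damping_mul_norm_sq_isLittleO_sq ha ha0 haC hK haK hh hu hus hmass hf).add ?_
  simpa using (isBigO_refl (fun n => h n ^ 2) l).mul_isLittleO
    (integral_damping_mul_gradNormSq_isLittleO_one ha ha0 hh hu hus hmass hf)

lemma isLittleO_of_le_mul_inv_mul {X E k : ι → ℝ} (hh : ∀ n, h n ≠ 0) (hX0 : ∀ n, 0 ≤ X n)
    (hX : ∀ n, X n ≤ k n * (h n)⁻¹ * E n) (hk : k =O[l] fun _ => (1 : ℝ))
    (hE : E =o[l] fun n => h n ^ 2) : X =o[l] h := by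
  refine IsBigO.trans_isLittleO (g := fun n => k n * (h n)⁻¹ * E n)
    (.of_norm_le fun n => (Real.norm_of_nonneg (hX0 n)).trans_le (hX n)) ?_
  simpa [sq, hh] using (hk.mul (isBigO_refl (fun n => (h n)⁻¹) l)).mul_isLittleO hE

lemma sqrt_integral_isLittleO_sqrt_of_le_energyDensity (ha : ContDiff ℝ 1 a)
    (ha0 : ∀ x, 0 ≤ a x) (haK : ∀ x, ‖gradient a x‖ ≤ K * √(a x)) (hh : ∀ n, 0 < h n)
    (hhO : h =O[l] fun _ => (1 : ℝ)) (hu : ∀ n, ContDiff ℝ 1 (u n))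
    (hus : ∀ n, HasCompactSupport (u n))
    (hE : (fun n => dampedEnergy (h n) a (u n)) =o[l] fun n => h n ^ 2)
    {χ : ℝ → ℝ} (hχ : Differentiable ℝ χ) (hχM : ∀ z, |1 - χ z| ≤ M) (hχL : ∀ z, |deriv χ z| ≤ L)
    (hχ1 : ∀ z ∈ Set.Icc (0 : ℝ) 1, χ z = 1) {F : ι → EuclideanSpace ℝ (Fin d) → ℝ}
    (hF0 : ∀ n x, 0 ≤ F n x)
    (hF : ∀ n x, F n x ≤ energyDensity (h n) (fun y => ((1 - χ (a y / h n) : ℝ) : ℂ) * u n y) x) :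
    (fun n => √(∫ x, F n x)) =o[l] fun n => √(h n) := by
  have hconst : (fun n => 2 * (M ^ 2 + L ^ 2 * K ^ 2 * h n)) =O[l] fun _ => (1 : ℝ) :=
    ((isBigO_const_const _ (one_ne_zero' ℝ) l).add (hhO.const_mul_left _)).const_mul_left 2
  have hle (n) : ∫ x, F n x ≤
      2 * (M ^ 2 + L ^ 2 * K ^ 2 * h n) * (h n)⁻¹ * dampedEnergy (h n) a (u n) :=
    integral_le_mul_dampedEnergy ha.continuous (hu n) (hus n) (hF0 n) fun x =>
      (hF n x).trans (energyDensity_one_sub_comp_div_mul_le (ha.differentiable one_ne_zero x)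
        (ha0 x) (haK x) hχ hχM hχL hχ1 ((hu n).differentiable one_ne_zero x) (hh n))
  exact (isLittleO_of_le_mul_inv_mul (fun n => (hh n).ne') (fun n => integral_nonneg (hF0 n))
    hle hconst hE).sqrt (.of_forall fun n => (hh n).le)

lemma setIntegral_energyDensity_isLittleO (ha : Continuous a) (ha0 : ∀ x, 0 ≤ a x)
    (hh : ∀ n, 0 < h n) (hu : ∀ n, ContDiff ℝ 1 (u n)) (hus : ∀ n, HasCompactSupport (u n))
    (hE : (fun n => dampedEnergy (h n) a (u n)) =o[l] fun n => h n ^ 2) {c : ℝ} (hc : 0 < c) :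
    (fun n => ∫ x in {x | c * h n ≤ a x}, energyDensity (h n) (u n) x) =o[l] h := by
  refine isLittleO_of_le_mul_inv_mul (fun n => (hh n).ne')
    (fun n => integral_nonneg fun x => energyDensity_nonneg) (fun n => ?_)
    (isBigO_const_const c⁻¹ one_ne_zero l) hE
  rw [← mul_inv]
  exact setIntegral_energyDensity_le ha ha0 (hu n) (hus n) (mul_pos hc (hh n))

end SemiclassicalLimit

theorem stmt_7_general {ι : Type*} {l : Filter ι} {d : ℕ} {a : EuclideanSpace ℝ (Fin d) → ℝ}
    {K : ℝ} (ha : ContDiff ℝ 1 a) (haC : ∃ C, ∀ x, a x ≤ C) (ha0 : ∀ x, 0 ≤ a x)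
    (haK : ∀ x, ‖gradient a x‖ ≤ K * √(a x))
    {h : ι → ℝ} {u : ι → EuclideanSpace ℝ (Fin d) → ℂ}
    (hh : ∀ n, 0 < h n) (hhO : h =O[l] fun _ => (1 : ℝ))
    (hu : ∀ n, ContDiff ℝ 2 (u n)) (hus : ∀ n, HasCompactSupport (u n))
    (hmass : (fun n => ∫ x, ‖u n x‖ ^ 2) =O[l] fun _ => (1 : ℝ))
    (hf : (fun n => √(∫ x, ‖Ph (h n) a (u n) x‖ ^ 2)) =o[l] h)
    {χ : ℝ → ℝ} (hχ : Differentiable ℝ χ) (hχM : ∃ M, ∀ z, ‖χ z‖ ≤ M)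
    (hχL : ∃ L, ∀ z, ‖deriv χ z‖ ≤ L) (hχ1 : ∀ z ∈ Set.Icc (0 : ℝ) 1, χ z = 1) :
    ((fun n => √(∫ x, ‖((1 - χ (a x / h n) : ℝ) : ℂ) * u n x‖ ^ 2)
        + √(∫ x, ∑ i : Fin d,
            ‖(h n : ℂ) * pd i (fun y => ((1 - χ (a y / h n) : ℝ) : ℂ) * u n y) x‖ ^ 2))
      =o[l] (fun n => √(h n))) ∧
    (∀ c : ℝ, 0 < c →
      (fun n => ∫ x in {x | c * h n ≤ a x},
          (‖u n x‖ ^ 2 + ∑ i : Fin d, ‖(h n : ℂ) * pd i (u n) x‖ ^ 2)) =o[l] h) := by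
  obtain ⟨C, haC⟩ := haC
  obtain ⟨M, hχM⟩ := hχM
  obtain ⟨L, hχL⟩ := hχL
  have hu1 (n) : ContDiff ℝ 1 (u n) := (hu n).of_le one_le_two
  have haK' (x) : ‖gradient a x‖ ≤ |K| * √(a x) := by grw [haK x, le_abs_self K]
  have hχM' (z) : |1 - χ z| ≤ 1 + M := by
    simpa using (norm_sub_le 1 (χ z)).trans (add_le_add_right (hχM z) _)
  have hE := dampedEnergy_isLittleO_sq ha ha0 haC (abs_nonneg K) haK' hh hu hus hmass hf
  have hcutoff {F : ι → EuclideanSpace ℝ (Fin d) → ℝ} :=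
    sqrt_integral_isLittleO_sqrt_of_le_energyDensity (F := F) ha ha0 haK hh hhO hu1 hus hE hχ
      hχM' hχL hχ1
  refine ⟨(hcutoff ?_ ?_).add (hcutoff ?_ ?_), fun c hc =>
    setIntegral_energyDensity_isLittleO ha.continuous ha0 hh hu1 hus hE hc⟩ <;> intro n x
  · positivity
  · exact norm_sq_le_energyDensity (u := fun y => ((1 - χ (a y / h n) : ℝ) : ℂ) * u n y)
  · positivity
  · exact sum_norm_mul_pd_sq_le_energyDensity

/-- **Lemma 3.4, first part, of the paper**: for a contradiction sequence and a cutoff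
`χ` (equal to `1` on `[-1,1]`, vanishing outside `[-2,2]`), the truncation
`w_n = (1 - χ(a/h_n)) u_n` to the region `a ≳ h_n` satisfies
(i) `‖w_n‖_{L²} + ‖h_n∇w_n‖_{L²} = o(h_n^{1/2})`, and
(ii) for every `c > 0`, `∫_{a ≥ c h_n} (|u_n|² + ‖h_n∇u_n‖²) = o(h_n)`. -/
theorem stmt_7 (d : ℕ) (hd : 1 ≤ d)
    (a : EuclideanSpace ℝ (Fin d) → ℝ) (K : ℝ)
    (haC1 : ContDiff ℝ 1 a) (habd : ∃ C, ∀ x, a x ≤ C) (hapos : ∀ x, 0 ≤ a x)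
    (haK : ∀ x, ‖gradient a x‖ ≤ K * Real.sqrt (a x))
    (h : ℕ → ℝ) (u : ℕ → EuclideanSpace ℝ (Fin d) → ℂ)
    (hhpos : ∀ n, 0 < h n) (hh0 : Tendsto h atTop (nhds 0))
    (husm : ∀ n, ContDiff ℝ (⊤ : ℕ∞) (u n)) (husupp : ∀ n, HasCompactSupport (u n))
    (hunorm : ∀ n, (∫ x, ‖u n x‖ ^ 2) = 1)
    (hf : (fun n => Real.sqrt (∫ x, ‖Ph (h n) a (u n) x‖ ^ 2)) =o[atTop] h)
    (χ : ℝ → ℝ) (hχ : ContDiff ℝ (⊤ : ℕ∞) χ) (hχsupp : HasCompactSupport χ)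
    (hχ1 : ∀ z : ℝ, |z| ≤ 1 → χ z = 1) (hχ0 : ∀ z : ℝ, 2 ≤ |z| → χ z = 0) :
    ((fun n => Real.sqrt (∫ x, ‖((1 - χ (a x / h n) : ℝ) : ℂ) * u n x‖ ^ 2)
        + Real.sqrt (∫ x, ∑ i : Fin d,
            ‖(h n : ℂ) * pd i (fun y => ((1 - χ (a y / h n) : ℝ) : ℂ) * u n y) x‖ ^ 2))
      =o[atTop] (fun n => Real.sqrt (h n))) ∧
    (∀ c : ℝ, 0 < c →
      (fun n => ∫ x in {x | c * h n ≤ a x},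
          (‖u n x‖ ^ 2 + ∑ i : Fin d, ‖(h n : ℂ) * pd i (u n) x‖ ^ 2)) =o[atTop] h) := by
  exact stmt_7_general haC1 habd hapos haK hhpos (hh0.isBigO_one ℝ)
    (fun n => contDiff_infty.1 (husm n) 2) husupp (isBigO_of_le _ (by simp [hunorm])) hf
    (hχ.differentiable (by simp)) (hχsupp.exists_bound_of_continuous hχ.continuous)
    (hχsupp.deriv.exists_bound_of_continuous (hχ.continuous_deriv (by simp)))
    fun z hz => hχ1 z (abs_le.2 ⟨by linarith [hz.1], hz.2⟩)

end
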